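/- In the k-block finite pool-based AL model, suppose the block tilted information is almost surely constant: j_k(W^k,U^k,H) = k·R almost surely under the joint law of the selection. Let b > 0 and n be a positive integer with |𝒯| ≤ e^{b·n}, let ε ∈ [0,1), and suppose P[ 𝖽_k(W^k,H) > d ] ≤ ε. Then b·n ≥ k·R − log( 1/(1−ε) ). -/

import Mathlib

open scoped BigOperators

/-!
On the event that the tilted information is at least `γ > 0` and the distortion at most `d`, the
ratio `Q(u | h) / P_U(u)` is at least `exp γ`. Since also `P_{T|U} ≤ 1`, the chain law is there at
most `exp (-γ)` times the measure `P_{W|U}(w | u) Q(u | h) P_{H|T}(h | t)` obtained by running the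
chain backwards from the counting measure on `𝒯`, whose total mass is at most `|𝒯|`. Hence this
event has probability at most `|𝒯| exp (-γ)`. The block model is the one-shot model for the
vectors `W^k` and `U^k`, with `λ k` in place of `λ` and `γ = k R`.
-/

lemma compProd_mem_stdSimplex {α β : Type*} [Fintype α] [Fintype β] {p : α → ℝ} {K : α → β → ℝ}
    (hp : p ∈ stdSimplex ℝ α) (hK : ∀ a, K a ∈ stdSimplex ℝ β) :
    (fun x : α × β => p x.1 * K x.1 x.2) ∈ stdSimplex ℝ (α × β) := by
  refine ⟨fun x => mul_nonneg (hp.1 x.1) ((hK x.1).1 x.2), ?_⟩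
  simp only [Fintype.sum_prod_type, ← Finset.mul_sum, (hK _).2, mul_one, hp.2]

lemma pi_mem_stdSimplex {ι : Type*} [Fintype ι] [DecidableEq ι] {α : ι → Type*}
    [∀ i, Fintype (α i)] {p : ∀ i, α i → ℝ} (hp : ∀ i, p i ∈ stdSimplex ℝ (α i)) :
    (fun a : ∀ i, α i => ∏ i, p i (a i)) ∈ stdSimplex ℝ (∀ i, α i) := by
  refine ⟨fun a => Finset.prod_nonneg fun i _ => (hp i).1 (a i), ?_⟩
  simp only [← Fintype.prod_sum, (hp _).2, Finset.prod_const_one]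

lemma pi_compProd_mem_stdSimplex {ι α β : Type*} [Fintype ι] [DecidableEq ι] [Fintype α]
    [Fintype β] {p : α → ℝ} {K : α → β → ℝ} (hp : p ∈ stdSimplex ℝ α)
    (hK : ∀ a, K a ∈ stdSimplex ℝ β) :
    (fun x : (ι → α) × (ι → β) => ∏ i, p (x.1 i) * K (x.1 i) (x.2 i)) ∈
      stdSimplex ℝ ((ι → α) × (ι → β)) := by
  simp only [Finset.prod_mul_distrib]
  exact compProd_mem_stdSimplex (pi_mem_stdSimplex fun _ => hp)
    fun a => pi_mem_stdSimplex fun i => hK (a i)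

section OneShot

variable {𝒲 𝒰 𝒯 ℋ : Type*} [Fintype 𝒲]

/-- The law of a Markov chain `W → U → T → H` with finite alphabets, where `P` is the joint law of
`(W, U)` and `PT`, `PH` are the kernels of the last two steps. The product is bracketed to the left
so that each step of the chain appends one component. -/
def chainLaw (P : 𝒲 × 𝒰 → ℝ) (PT : 𝒰 → 𝒯 → ℝ) (PH : 𝒯 → ℋ → ℝ) :
    ((𝒲 × 𝒰) × 𝒯) × ℋ → ℝ :=
  fun (((w, u), t), h) => P (w, u) * PT u t * PH t h

/-- The marginal law `P_U` of the second component of a pair `(W, U)` with joint law `P`. -/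
def sndMarginal (P : 𝒲 × 𝒰 → ℝ) (u : 𝒰) : ℝ :=
  ∑ w, P (w, u)

/-- The measure `P_{W|U}(w | u) Q(u | h) P_{H|T}(h | t)`, that is, the chain `T → H → U → W` started
from the counting measure on `𝒯`. The conditional law is taken to be `0` where `P_U` vanishes. -/
noncomputable def reverseChain (P : 𝒲 × 𝒰 → ℝ) (PH : 𝒯 → ℋ → ℝ) (Q : ℋ → 𝒰 → ℝ) :
    ((𝒲 × 𝒰) × 𝒯) × ℋ → ℝ :=
  fun (((w, u), t), h) => P (w, u) / sndMarginal P u * Q h u * PH t h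

/-- The tilted information `j(w, u, h) = log (Q(u | h) / P_U(u)) + lam (dst(w, h) - d)` of the
one-shot model. Beware that the logarithm is `0`, not `-∞`, where `Q(u | h) = 0`. -/
noncomputable def tiltedInformation (P : 𝒲 × 𝒰 → ℝ) (Q : ℋ → 𝒰 → ℝ) (dst : 𝒲 → ℋ → ℝ)
    (d lam : ℝ) (w : 𝒲) (u : 𝒰) (h : ℋ) : ℝ :=
  Real.log (Q h u / sndMarginal P u) + lam * (dst w h - d)

variable {P : 𝒲 × 𝒰 → ℝ} {PT : 𝒰 → 𝒯 → ℝ} {PH : 𝒯 → ℋ → ℝ} {Q : ℋ → 𝒰 → ℝ}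
  {dst : 𝒲 → ℋ → ℝ} {d lam γ ε : ℝ}

lemma exp_mul_sndMarginal_le_of_le_tiltedInformation {w : 𝒲} {u : 𝒰} {h : ℋ}
    (hP : 0 < sndMarginal P u) (hQ : 0 ≤ Q h u) (hlam : 0 ≤ lam) (hγ : 0 < γ)
    (hd : dst w h ≤ d) (hj : γ ≤ tiltedInformation P Q dst d lam w u h) :
    Real.exp γ * sndMarginal P u ≤ Q h u := by
  have hlog : γ ≤ Real.log (Q h u / sndMarginal P u) :=
    hj.trans (add_le_of_nonpos_right
      (mul_nonpos_of_nonneg_of_nonpos hlam (sub_nonpos.2 hd)))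
  have hratio : 0 < Q h u / sndMarginal P u := by
    refine (div_nonneg hQ hP.le).lt_of_ne' fun hzero => ?_
    rw [hzero, Real.log_zero] at hlog
    exact hγ.not_ge hlog
  rwa [Real.le_log_iff_exp_le hratio, le_div_iff₀ hP] at hlog

lemma reverseChain_nonneg (hP : ∀ x, 0 ≤ P x) (hPH : ∀ t h, 0 ≤ PH t h)
    (hQ : ∀ h u, 0 ≤ Q h u) (x : ((𝒲 × 𝒰) × 𝒯) × ℋ) : 0 ≤ reverseChain P PH Q x :=
  mul_nonneg (mul_nonneg (div_nonneg (hP _) (Finset.sum_nonneg fun _ _ => hP _)) (hQ _ _))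
    (hPH _ _)

lemma exp_mul_chainLaw_le_reverseChain (hP : ∀ x, 0 ≤ P x) {w : 𝒲} {u : 𝒰} {t : 𝒯} {h : ℋ}
    (hPT : PT u t ≤ 1) (hPH : 0 ≤ PH t h) (hQ : 0 ≤ Q h u) (hlam : 0 ≤ lam) (hγ : 0 < γ)
    (hd : dst w h ≤ d) (hj : γ ≤ tiltedInformation P Q dst d lam w u h) :
    Real.exp γ * chainLaw P PT PH (((w, u), t), h) ≤ reverseChain P PH Q (((w, u), t), h) := by
  have hPwu : 0 ≤ P (w, u) := hP (w, u)
  rcases hPwu.eq_or_lt with hzero | hpos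
  · simp [chainLaw, reverseChain, ← hzero]
  have hmarginal : 0 < sndMarginal P u :=
    Finset.sum_pos' (fun _ _ => hP _) ⟨w, Finset.mem_univ w, hpos⟩
  have hratio : Real.exp γ ≤ Q h u / sndMarginal P u :=
    (le_div_iff₀ hmarginal).2
      (exp_mul_sndMarginal_le_of_le_tiltedInformation hmarginal hQ hlam hγ hd hj)
  calc Real.exp γ * (P (w, u) * PT u t * PH t h)
      ≤ Real.exp γ * (P (w, u) * 1 * PH t h) := by gcongr
    _ ≤ Q h u / sndMarginal P u * (P (w, u) * 1 * PH t h) := by gcongr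
    _ = P (w, u) / sndMarginal P u * Q h u * PH t h := by ring

variable [Fintype 𝒰] [Fintype 𝒯] [Fintype ℋ]

lemma chainLaw_mem_stdSimplex (hP : P ∈ stdSimplex ℝ (𝒲 × 𝒰))
    (hPT : ∀ u, PT u ∈ stdSimplex ℝ 𝒯) (hPH : ∀ t, PH t ∈ stdSimplex ℝ ℋ) :
    chainLaw P PT PH ∈ stdSimplex ℝ (((𝒲 × 𝒰) × 𝒯) × ℋ) :=
  compProd_mem_stdSimplex (compProd_mem_stdSimplex hP fun x => hPT x.2) fun y => hPH y.2

lemma sum_reverseChain_le_card (hPH : ∀ t, PH t ∈ stdSimplex ℝ ℋ)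
    (hQ : ∀ h, Q h ∈ stdSimplex ℝ 𝒰) : ∑ x, reverseChain P PH Q x ≤ Fintype.card 𝒯 := by
  have sum_conditional_le_one (u : 𝒰) : ∑ w, P (w, u) / sndMarginal P u ≤ 1 := by
    rw [← Finset.sum_div]
    exact div_self_le_one _
  calc ∑ x, reverseChain P PH Q x
      = ∑ h, ∑ t, ∑ u, (∑ w, P (w, u) / sndMarginal P u) * Q h u * PH t h := by
        simp only [Fintype.sum_prod_type_right, reverseChain, Finset.sum_mul]
    _ ≤ ∑ h, ∑ t, ∑ u, Q h u * PH t h := by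
        gcongr with h _ t _ u _
        · exact (hPH t).1 h
        · exact mul_le_of_le_one_left ((hQ h).1 u) (sum_conditional_le_one u)
    _ = ∑ t, ∑ h, PH t h := by
        rw [Finset.sum_comm]
        simp only [← Finset.sum_mul, (hQ _).2, one_mul]
    _ = Fintype.card 𝒯 := by simp [(hPH _).2]

lemma exp_mul_prob_tiltedInformation_ge_and_dst_le_le_card (hP : P ∈ stdSimplex ℝ (𝒲 × 𝒰))
    (hPT : ∀ u, PT u ∈ stdSimplex ℝ 𝒯) (hPH : ∀ t, PH t ∈ stdSimplex ℝ ℋ)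
    (hQ : ∀ h, Q h ∈ stdSimplex ℝ 𝒰) (hlam : 0 ≤ lam) (hγ : 0 < γ) :
    Real.exp γ * ∑ x with γ ≤ tiltedInformation P Q dst d lam x.1.1.1 x.1.1.2 x.2 ∧
        dst x.1.1.1 x.2 ≤ d, chainLaw P PT PH x ≤ Fintype.card 𝒯 := by
  rw [Finset.mul_sum]
  calc _ ≤ ∑ x with γ ≤ tiltedInformation P Q dst d lam x.1.1.1 x.1.1.2 x.2 ∧
        dst x.1.1.1 x.2 ≤ d, reverseChain P PH Q x := by
        refine Finset.sum_le_sum fun x hx => ?_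
        obtain ⟨hj, hd⟩ := (Finset.mem_filter.1 hx).2
        exact exp_mul_chainLaw_le_reverseChain hP.1
          (mem_Icc_of_mem_stdSimplex (hPT x.1.1.2) x.1.2).2 ((hPH _).1 _) ((hQ _).1 _)
          hlam hγ hd hj
    _ ≤ ∑ x, reverseChain P PH Q x :=
        Finset.sum_le_univ_sum_of_nonneg
          (reverseChain_nonneg hP.1 (fun t => (hPH t).1) fun h => (hQ h).1)
    _ ≤ Fintype.card 𝒯 := sum_reverseChain_le_card hPH hQ

theorem prob_tiltedInformation_ge_le_prob_excess_add [Nonempty 𝒯]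
    (hP : P ∈ stdSimplex ℝ (𝒲 × 𝒰))
    (hPT : ∀ u, PT u ∈ stdSimplex ℝ 𝒯) (hPH : ∀ t, PH t ∈ stdSimplex ℝ ℋ)
    (hQ : ∀ h, Q h ∈ stdSimplex ℝ 𝒰) (hlam : 0 ≤ lam) :
    ∑ x with γ ≤ tiltedInformation P Q dst d lam x.1.1.1 x.1.1.2 x.2, chainLaw P PT PH x ≤
      ∑ x with d < dst x.1.1.1 x.2, chainLaw P PT PH x + Fintype.card 𝒯 * Real.exp (-γ) := by
  obtain ⟨hnonneg, hsum⟩ := chainLaw_mem_stdSimplex hP hPT hPH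
  rcases le_or_gt γ 0 with hγ | hγ
  · have hcard : (1 : ℝ) ≤ Fintype.card 𝒯 := mod_cast Fintype.card_pos
    calc _ ≤ ∑ x, chainLaw P PT PH x := Finset.sum_le_univ_sum_of_nonneg hnonneg
      _ = 1 := hsum
      _ ≤ Fintype.card 𝒯 * Real.exp (-γ) :=
        one_le_mul_of_one_le_of_one_le hcard (Real.one_le_exp (neg_nonneg.2 hγ))
      _ ≤ _ := le_add_of_nonneg_left (Finset.sum_nonneg fun x _ => hnonneg x)
  · rw [← Finset.sum_filter_add_sum_filter_not _ (fun x => d < dst x.1.1.1 x.2)]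
    simp only [Finset.filter_filter, not_lt]
    gcongr ?_ + ?_
    · exact Finset.sum_le_sum_of_subset_of_nonneg
        (Finset.monotone_filter_right _ fun _ _ hx => hx.2) fun x _ _ => hnonneg x
    · rw [Real.exp_neg, ← div_eq_mul_inv, le_div_iff₀' (Real.exp_pos γ)]
      exact exp_mul_prob_tiltedInformation_ge_and_dst_le_le_card hP hPT hPH hQ hlam hγ

theorem rate_converse_block_constant_tilted_general [Nonempty 𝒯]
    (hP : P ∈ stdSimplex ℝ (𝒲 × 𝒰))
    (hPT : ∀ u, PT u ∈ stdSimplex ℝ 𝒯) (hPH : ∀ t, PH t ∈ stdSimplex ℝ ℋ)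
    (hQ : ∀ h, Q h ∈ stdSimplex ℝ 𝒰) (hlam : 0 ≤ lam)
    (hj : ∀ w u t h, chainLaw P PT PH (((w, u), t), h) ≠ 0 →
      γ ≤ tiltedInformation P Q dst d lam w u h)
    (hε : ε < 1) (hexcess : ∑ x with d < dst x.1.1.1 x.2, chainLaw P PT PH x ≤ ε) :
    γ - Real.log (1 / (1 - ε)) ≤ Real.log (Fintype.card 𝒯) := by
  have hprob : ∑ x with γ ≤ tiltedInformation P Q dst d lam x.1.1.1 x.1.1.2 x.2,
      chainLaw P PT PH x = 1 := by
    rw [Finset.sum_filter_of_ne fun x _ => hj x.1.1.1 x.1.1.2 x.1.2 x.2]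
    exact (chainLaw_mem_stdSimplex hP hPT hPH).2
  have hbound : 1 - ε ≤ Fintype.card 𝒯 * Real.exp (-γ) := by
    have := prob_tiltedInformation_ge_le_prob_excess_add (γ := γ) (dst := dst) (d := d)
      hP hPT hPH hQ hlam
    linarith
  have hlog := Real.log_le_log (sub_pos.2 hε) hbound
  rw [Real.log_mul (by positivity) (Real.exp_ne_zero _), Real.log_exp] at hlog
  rw [one_div, Real.log_inv]
  linarith

end OneShot

/-- **Converse bound on the rate in the `k`-block finite pool-based AL model when the
block tilted information is almost surely constant** (the `V = 0` case in the proof of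
Theorem 2 of the paper).

`k`-block model: `W^k = (W_1,…,W_k)` i.i.d. with pmf `PW`; given `W^k` the pools
`U^k = (U_1,…,U_k)` are conditionally independent with `U_i ∼ PU (W_i)`; a data
selection kernel `PT` from `𝒰^k` to `𝒯` and a learning kernel `PH` from `𝒯` to `ℋ`,
so the joint law of `(W^k,U^k,T,H)` is
`(∏ i, PW (w i) * PU (w i) (u i)) * PT u t * PH t h`.
Block distortion `dst_k (w,h) = (1/k) ∑ i, dst (w i) h`; block tilted information
`j_k(w,u,h) = log (Qk h u / P_{U^k} u) + lam * k * (dst_k (w,h) - d)` where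
`P_{U^k} u = ∑ w, ∏ i, PW (w i) * PU (w i) (u i)`.

If `j_k(W^k,U^k,H) = k·R` almost surely under the joint law, `|𝒯| ≤ exp (b*n)`,
`ε ∈ [0,1)` and `P[dst_k (W^k,H) > d] ≤ ε`, then `b·n ≥ k·R − log (1/(1−ε))`. -/
theorem rate_converse_block_constant_tilted
    {𝒲 𝒰 𝒯 ℋ : Type*} [Fintype 𝒲] [Nonempty 𝒲] [Fintype 𝒰] [Nonempty 𝒰]
    [Fintype 𝒯] [Nonempty 𝒯] [Fintype ℋ] [Nonempty ℋ]
    (k : ℕ) (hk : 0 < k)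
    (PW : 𝒲 → ℝ) (hPW0 : ∀ w, 0 ≤ PW w) (hPW1 : ∑ w, PW w = 1)
    (PU : 𝒲 → 𝒰 → ℝ) (hPU0 : ∀ w u, 0 ≤ PU w u) (hPU1 : ∀ w, ∑ u, PU w u = 1)
    (PT : (Fin k → 𝒰) → 𝒯 → ℝ) (hPT0 : ∀ u t, 0 ≤ PT u t) (hPT1 : ∀ u, ∑ t, PT u t = 1)
    (PH : 𝒯 → ℋ → ℝ) (hPH0 : ∀ t h, 0 ≤ PH t h) (hPH1 : ∀ t, ∑ h, PH t h = 1)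
    (dst : 𝒲 → ℋ → ℝ) (hdst : ∀ w h, 0 ≤ dst w h) (d : ℝ) (hd : 0 ≤ d)
    (lam : ℝ) (hlam : 0 ≤ lam)
    (Qk : ℋ → (Fin k → 𝒰) → ℝ) (hQ0 : ∀ h u, 0 ≤ Qk h u) (hQ1 : ∀ h, ∑ u, Qk h u = 1)
    (R : ℝ)
    (hconst : ∀ (w : Fin k → 𝒲) (u : Fin k → 𝒰) (t : 𝒯) (h : ℋ),
      (∏ i, PW (w i) * PU (w i) (u i)) * PT u t * PH t h ≠ 0 →
        Real.log (Qk h u / ∑ w' : Fin k → 𝒲, ∏ i, PW (w' i) * PU (w' i) (u i))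
            + lam * k * ((1 / (k : ℝ)) * (∑ i, dst (w i) h) - d) = k * R)
    (b : ℝ) (hb : 0 < b) (n : ℕ) (hn : 0 < n)
    (hcard : (Fintype.card 𝒯 : ℝ) ≤ Real.exp (b * n))
    (ε : ℝ) (hε0 : 0 ≤ ε) (hε1 : ε < 1)
    (hexcess : (∑ w : Fin k → 𝒲, ∑ u : Fin k → 𝒰, ∑ t, ∑ h,
        if d < (1 / (k : ℝ)) * ∑ i, dst (w i) h
        then (∏ i, PW (w i) * PU (w i) (u i)) * PT u t * PH t h else 0) ≤ ε) :
    k * R - Real.log (1 / (1 - ε)) ≤ b * n := by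
  have hconverse := rate_converse_block_constant_tilted_general (lam := lam * k)
    (pi_compProd_mem_stdSimplex ⟨hPW0, hPW1⟩ fun w => ⟨hPU0 w, hPU1 w⟩)
    (fun u => ⟨hPT0 u, hPT1 u⟩) (fun t => ⟨hPH0 t, hPH1 t⟩) (fun h => ⟨hQ0 h, hQ1 h⟩)
    (by positivity) (fun w u t h hne => (hconst w u t h hne).ge) hε1
    (by simpa only [Finset.sum_filter, Fintype.sum_prod_type, chainLaw] using hexcess)
  exact hconverse.trans ((Real.log_le_iff_le_exp (by positivity)).2 hcard)
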